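/- arXiv:2110.11326 — 6 statements merged into one kernel-verified Lean document; each statement's English description precedes it below -/
import Mathlib

section
/- Let n > m ≥ 1 be integers, let a₁,…,aₙ ∈ ℝᵐ span ℝᵐ, and let Γ be a real (n−m)×n matrix whose rows are linearly independent and each of whose rows is a linear relation among the aᵢ, i.e. Σᵢ Γ_{r,i} aᵢ = 0 for every r. Let b ∈ ℝⁿ, set δ = Γb ∈ ℝ^{n−m}, and let γᵢ ∈ ℝ^{n−m} denote the i-th column of Γ. Then the following are equivalent: (i) there exist x₀ ∈ ℝᵐ and a real number c ≠ 0 such that bᵢ = c + ⟨aᵢ, x₀⟩ for every i (i.e., after a translation the polytope P = {x ∈ ℝᵐ : ⟨aᵢ,x⟩ + bᵢ ≥ 0 for all i} is presented with all offsets equal, the Fano condition); (ii) there exists a real number C ≠ 0 such that γ₁ + ⋯ + γₙ = C·δ. -/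
/-!
Evaluating linear functionals at the `aᵢ` is the transpose of the map sending coefficients to linear
combinations of the `aᵢ`, so a vector `v` has the form `vᵢ = φ(aᵢ)` exactly when it is orthogonal to
every linear relation among the `aᵢ`, that is, when `Γ v = 0`. Applied to `v = b - c·(1, …, 1)`,
this says that a translation makes all offsets equal to `c` if and only if `δ = c (γ₁ + ⋯ + γₙ)`;
thus `C = c⁻¹`.
-/

open Matrix Module

section GaleDual

variable {K V ι ρ : Type*} [Fintype ι] {a : ι → V} {Γ : Matrix ρ ι K}

theorem span_range_row_le_ker_linearCombination [Semiring K] [AddCommMonoid V] [Module K V]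
    (hrel : ∀ r, ∑ i, Γ r i • a i = 0) :
    Submodule.span K (Set.range Γ.row) ≤ LinearMap.ker (Fintype.linearCombination K a) := by
  rw [Submodule.span_le, Set.range_subset_iff]
  exact hrel

theorem mulVec_eq_zero_iff_forall_mem_span_row [CommSemiring K] (v : ι → K) :
    Γ *ᵥ v = 0 ↔ ∀ w ∈ Submodule.span K (Set.range Γ.row), v ⬝ᵥ w = 0 := by
  classical
  have hspan_le : Submodule.span K (Set.range Γ.row) ≤ LinearMap.ker (dotProductEquiv K ι v) ↔
      ∀ r, v ⬝ᵥ Γ r = 0 := by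
    rw [Submodule.span_le, Set.range_subset_iff]
    rfl
  simp only [funext_iff, mulVec, Pi.zero_apply, dotProduct_comm _ v]
  exact hspan_le.symm

section DivisionRing

variable [DivisionRing K] [AddCommGroup V] [Module K V]

theorem finrank_ker_linearCombination_add_finrank
    (hspan : Submodule.span K (Set.range a) = ⊤) :
    finrank K (LinearMap.ker (Fintype.linearCombination K a)) + finrank K V = Fintype.card ι := by
  have hrange : LinearMap.range (Fintype.linearCombination K a) = ⊤ := by
    rw [Fintype.range_linearCombination, hspan]
  rw [← finrank_top K V, ← hrange, add_comm, LinearMap.finrank_range_add_finrank_ker,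
    finrank_fintype_fun_eq_card]

theorem span_range_row_eq_ker_linearCombination [Fintype ρ]
    (hspan : Submodule.span K (Set.range a) = ⊤) (hindep : LinearIndependent K Γ.row)
    (hrel : ∀ r, ∑ i, Γ r i • a i = 0)
    (hcard : Fintype.card ρ + finrank K V = Fintype.card ι) :
    Submodule.span K (Set.range Γ.row) = LinearMap.ker (Fintype.linearCombination K a) := by
  apply Submodule.eq_of_le_of_finrank_eq (span_range_row_le_ker_linearCombination hrel)
  rw [finrank_span_eq_card hindep]
  exact Nat.add_right_cancel (hcard.trans (finrank_ker_linearCombination_add_finrank hspan).symm)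

end DivisionRing

variable [Field K] [AddCommGroup V] [Module K V]

theorem exists_dual_apply_eq_iff_forall_mem_ker (v : ι → K) :
    (∃ φ : Dual K V, ∀ i, v i = φ (a i)) ↔
      ∀ w ∈ LinearMap.ker (Fintype.linearCombination K a), v ⬝ᵥ w = 0 := by
  classical
  have hmem : dotProductEquiv K ι v ∈ LinearMap.range (Fintype.linearCombination K a).dualMap ↔
      ∃ φ : Dual K V, ∀ i, v i = φ (a i) := by
    refine exists_congr fun φ => ?_
    constructor
    · intro hφ i
      simpa using (LinearMap.congr_fun hφ (Pi.single i 1)).symm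
    · intro hφ
      exact (Pi.basisFun K ι).ext fun i => by simp [hφ i]
  rw [← hmem, LinearMap.range_dualMap_eq_dualAnnihilator_ker, Submodule.mem_dualAnnihilator]
  rfl

theorem exists_dual_apply_eq_iff_mulVec_eq_zero
    (hΓ : Submodule.span K (Set.range Γ.row) = LinearMap.ker (Fintype.linearCombination K a))
    (v : ι → K) :
    (∃ φ : Dual K V, ∀ i, v i = φ (a i)) ↔ Γ *ᵥ v = 0 := by
  rw [exists_dual_apply_eq_iff_forall_mem_ker, ← hΓ, mulVec_eq_zero_iff_forall_mem_span_row]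

theorem exists_dual_eq_const_add_iff_mulVec_eq
    (hΓ : Submodule.span K (Set.range Γ.row) = LinearMap.ker (Fintype.linearCombination K a))
    (b : ι → K) (c : K) :
    (∃ φ : Dual K V, ∀ i, b i = c + φ (a i)) ↔ Γ *ᵥ b = c • Γ *ᵥ 1 := by
  rw [← sub_eq_zero, ← mulVec_smul, ← mulVec_sub, ← exists_dual_apply_eq_iff_mulVec_eq_zero hΓ]
  simp [sub_eq_iff_eq_add']

theorem stmt_0_general
    (hΓ : Submodule.span K (Set.range Γ.row) = LinearMap.ker (Fintype.linearCombination K a))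
    (b : ι → K) :
    (∃ (φ : Dual K V) (c : K), c ≠ 0 ∧ ∀ i, b i = c + φ (a i)) ↔
      ∃ C : K, C ≠ 0 ∧ ∀ r, ∑ i, Γ r i = C * (Γ *ᵥ b) r := by
  have hsum (C : K) : (∀ r, ∑ i, Γ r i = C * (Γ *ᵥ b) r) ↔ Γ *ᵥ 1 = C • Γ *ᵥ b := by
    simp [funext_iff, mulVec, dotProduct_one]
  simp only [hsum]
  rw [exists_comm]
  simp only [exists_and_left, exists_dual_eq_const_add_iff_mulVec_eq hΓ]
  constructor
  · rintro ⟨c, hc, h⟩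
    exact ⟨c⁻¹, inv_ne_zero hc, ((inv_smul_eq_iff₀ hc).mpr h).symm⟩
  · rintro ⟨C, hC, h⟩
    exact ⟨C⁻¹, inv_ne_zero hC, ((inv_smul_eq_iff₀ hC).mpr h).symm⟩

end GaleDual

/-- Lemma `equivmon`, linear-algebraic form.
Let `n > m ≥ 1`, let `a₁,…,aₙ ∈ ℝᵐ` span `ℝᵐ`, and let `Γ` be a real `(n−m)×n` matrix with
linearly independent rows, each row being a linear relation among the `aᵢ`.  For `b ∈ ℝⁿ`,
set `δ = Γb` and let `γᵢ` be the `i`-th column of `Γ`.  Then the polytope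
`P = {x : ⟨aᵢ,x⟩ + bᵢ ≥ 0}` admits a Fano presentation (all offsets equal after a translation)
iff `γ₁ + ⋯ + γₙ = C·δ` for some `C ≠ 0`. -/
theorem stmt_0 (n m : ℕ) (hm : 1 ≤ m) (hmn : m < n)
    (a : Fin n → (Fin m → ℝ))
    (hspan : Submodule.span ℝ (Set.range a) = ⊤)
    (Γ : Matrix (Fin (n - m)) (Fin n) ℝ)
    (hindep : LinearIndependent ℝ (fun r : Fin (n - m) => Γ r))
    (hrel : ∀ r : Fin (n - m), ∑ i : Fin n, Γ r i • a i = 0)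
    (b : Fin n → ℝ) :
    (∃ (x₀ : Fin m → ℝ) (c : ℝ), c ≠ 0 ∧
        ∀ i : Fin n, b i = c + ∑ j : Fin m, a i j * x₀ j)
      ↔ (∃ C : ℝ, C ≠ 0 ∧
        ∀ r : Fin (n - m), (∑ i : Fin n, Γ r i) = C * Γ.mulVec b r) := by
  have hcard : Fintype.card (Fin (n - m)) + finrank ℝ (Fin m → ℝ) = Fintype.card (Fin n) := by
    simpa using Nat.sub_add_cancel hmn.le
  have hΓ := span_range_row_eq_ker_linearCombination hspan hindep hrel hcard
  rw [← stmt_0_general hΓ b, (dotProductEquiv ℝ (Fin m)).surjective.exists]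
  simp [dotProduct, mul_comm]
end

section
/- Let n ≥ 1 and k ≥ 0 be integers and let γ₁,…,γₙ ∈ ℤᵏ. Let u, û ∈ ℝⁿ and φ, φ̂ ∈ ℝᵏ, and suppose that the ℤ-span (additive subgroup of ℝᵏ generated by) of {γᵢ − γⱼ : uᵢ ≠ 0 and uⱼ ≠ 0} equals the ℤ-span of {γᵢ − γⱼ : 1 ≤ i, j ≤ n}. If there exists a nonzero complex number c such that ûⱼ · exp(iπ⟨γⱼ, φ̂⟩) = c · uⱼ · exp(iπ⟨γⱼ, φ⟩) for every j = 1,…,n (i.e., the two vectors of ℂⁿ determine the same point of ℂP^{n−1}), then ⟨γᵢ − γⱼ, φ̂ − φ⟩ ∈ ℤ for all 1 ≤ i, j ≤ n; that is, φ̂ − φ lies in the dual lattice Λ* = {y ∈ ℝᵏ : ⟨γᵢ − γⱼ, y⟩ ∈ ℤ for all i, j}. -/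
/-!
Proportionality determines `e^{iπ⟨γᵢ, φ̂ - φ⟩}`, for `i` in the support of `u`, up to a real factor
and the common constant `c`. In the quotient for two such indices `c` cancels, so
`e^{iπ⟨γᵢ - γⱼ, φ̂ - φ⟩}` is real, which forces `⟨γᵢ - γⱼ, φ̂ - φ⟩ ∈ ℤ`. Integrality then passes
from the differences supported on `u` to the lattice they span, which is all of `Λ`.
-/

open Real

section Phase

theorem exists_int_eq_of_exp_pi_mul_I_eq_ofReal {x r : ℝ}
    (h : Complex.exp ((π * x : ℝ) * Complex.I) = r) : ∃ z : ℤ, x = z := by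
  have sin_eq_zero : sin (π * x) = 0 := by
    rw [← Complex.exp_ofReal_mul_I_im, h, Complex.ofReal_im]
  obtain ⟨z, hz⟩ := sin_eq_zero_iff.mp sin_eq_zero
  exact ⟨z, mul_left_cancel₀ pi_ne_zero (by rw [← hz, mul_comm])⟩

theorem exp_sub_eq_of_mul_exp_eq {a b c s t : ℂ} (hb : b ≠ 0) (hc : c ≠ 0)
    (h : a * Complex.exp t = c * (b * Complex.exp s)) :
    Complex.exp (t - s) = c * (b / a) := by
  have ha : a ≠ 0 := by
    rintro rfl
    rw [zero_mul] at h
    exact mul_ne_zero hc (mul_ne_zero hb (Complex.exp_ne_zero s)) h.symm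
  rw [Complex.exp_sub, ← mul_div_assoc, div_eq_div_iff (Complex.exp_ne_zero s) ha]
  linear_combination h

theorem exists_int_sub_eq_of_mul_exp_eq {a b a' b' s t s' t' : ℝ} {c : ℂ}
    (hb : b ≠ 0) (hb' : b' ≠ 0) (hc : c ≠ 0)
    (h : a * Complex.exp ((π * t : ℝ) * Complex.I)
      = c * (b * Complex.exp ((π * s : ℝ) * Complex.I)))
    (h' : a' * Complex.exp ((π * t' : ℝ) * Complex.I)
      = c * (b' * Complex.exp ((π * s' : ℝ) * Complex.I))) :
    ∃ z : ℤ, (t - s) - (t' - s') = z := by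
  refine exists_int_eq_of_exp_pi_mul_I_eq_ofReal (r := (b / a) / (b' / a')) ?_
  calc Complex.exp ((π * ((t - s) - (t' - s')) : ℝ) * Complex.I)
      = Complex.exp ((π * t : ℝ) * Complex.I - (π * s : ℝ) * Complex.I)
          / Complex.exp ((π * t' : ℝ) * Complex.I - (π * s' : ℝ) * Complex.I) := by
        rw [← Complex.exp_sub]
        push_cast
        ring_nf
    _ = (c * (b / a)) / (c * (b' / a')) := by
        rw [exp_sub_eq_of_mul_exp_eq (Complex.ofReal_ne_zero.mpr hb) hc h,
          exp_sub_eq_of_mul_exp_eq (Complex.ofReal_ne_zero.mpr hb') hc h']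
    _ = ((b / a) / (b' / a') : ℝ) := by
        rw [mul_div_mul_left _ _ hc]
        push_cast
        rfl

end Phase

section DifferenceSpan

variable {ι V W : Type*} [AddCommGroup V] [AddCommGroup W] {γ : ι → V}

/-- The `ℤ`-span of the differences `γ i - γ j` with `i, j ∈ s`. For `s` the support of `u` this is
the lattice `Λ_u`, and for `s = Set.univ` it is `Λ`. -/
def differenceSpan (γ : ι → V) (s : Set ι) : AddSubgroup V :=
  AddSubgroup.closure {x | ∃ i j, i ∈ s ∧ j ∈ s ∧ x = γ i - γ j}

theorem exists_int_eq_of_mem_differenceSpan {s : Set ι} (f : V →ₗ[ℤ] ℝ)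
    (hf : ∀ i ∈ s, ∀ j ∈ s, ∃ z : ℤ, f (γ i - γ j) = z) {x : V} (hx : x ∈ differenceSpan γ s) :
    ∃ z : ℤ, f x = z := by
  have span_le : differenceSpan γ s ≤ (Int.castAddHom ℝ).range.comap f.toAddMonoidHom := by
    refine (AddSubgroup.closure_le _).mpr ?_
    rintro _ ⟨i, j, hi, hj, rfl⟩
    obtain ⟨z, hz⟩ := hf i hi j hj
    exact ⟨z, hz.symm⟩
  obtain ⟨z, hz⟩ := span_le hx
  exact ⟨z, hz.symm⟩

theorem stmt_1_general (B : V →ₗ[ℤ] W →ₗ[ℤ] ℝ) {u uh : ι → ℝ} {φ φh : W} {c : ℂ}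
    (hΛ : ∀ i j, γ i - γ j ∈ differenceSpan γ u.support) (hc : c ≠ 0)
    (h : ∀ j, uh j * Complex.exp ((π * B (γ j) φh : ℝ) * Complex.I)
      = c * (u j * Complex.exp ((π * B (γ j) φ : ℝ) * Complex.I))) (i j : ι) :
    ∃ z : ℤ, B (γ i - γ j) (φh - φ) = z := by
  refine exists_int_eq_of_mem_differenceSpan (B.flip (φh - φ)) (fun i hi j hj ↦ ?_) (hΛ i j)
  simpa only [LinearMap.flip_apply, map_sub, LinearMap.sub_apply, sub_sub_sub_comm] using
    exists_int_sub_eq_of_mul_exp_eq hi hj hc (h i) (h j)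

end DifferenceSpan

/-- key step in Lemma `embc1`.
If the ℤ-span of `{γᵢ − γⱼ : uᵢ ≠ 0, uⱼ ≠ 0}` equals the ℤ-span of all differences
`γᵢ − γⱼ`, and the two vectors `(ûⱼ e^{iπ⟨γⱼ,φ̂⟩})ⱼ` and `(uⱼ e^{iπ⟨γⱼ,φ⟩})ⱼ` of `ℂⁿ`
are proportional by a nonzero constant, then `⟨γᵢ − γⱼ, φ̂ − φ⟩ ∈ ℤ` for all `i, j`,
i.e. `φ̂ − φ` lies in the dual lattice `Λ*`. -/
theorem stmt_1 (n k : ℕ) (hn : 1 ≤ n)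
    (γ : Fin n → (Fin k → ℤ)) (u uh : Fin n → ℝ) (φ φh : Fin k → ℝ)
    (hlat : AddSubgroup.closure
        {x : Fin k → ℝ | ∃ i j : Fin n, u i ≠ 0 ∧ u j ≠ 0 ∧
            x = fun t => ((γ i t : ℝ) - (γ j t : ℝ))}
      = AddSubgroup.closure
        {x : Fin k → ℝ | ∃ i j : Fin n,
            x = fun t => ((γ i t : ℝ) - (γ j t : ℝ))})
    (hc : ∃ c : ℂ, c ≠ 0 ∧ ∀ j : Fin n,
        (uh j : ℂ) * Complex.exp ((Real.pi * ∑ t, (γ j t : ℝ) * φh t : ℝ) * Complex.I)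
          = c * ((u j : ℂ) *
              Complex.exp ((Real.pi * ∑ t, (γ j t : ℝ) * φ t : ℝ) * Complex.I))) :
    ∀ i j : Fin n, ∃ z : ℤ,
      (∑ t, ((γ i t : ℝ) - (γ j t : ℝ)) * (φh t - φ t)) = (z : ℝ) := by
  obtain ⟨c, hc0, hc⟩ := hc
  exact stmt_1_general (dotProductBilin ℤ ℤ) (γ := fun j t ↦ (γ j t : ℝ))
    (fun i j ↦ hlat.ge <| AddSubgroup.subset_closure ⟨i, j, rfl⟩) hc0 hc
end

section
/- Let n, k be nonnegative integers, let γ₁,…,γₙ ∈ ℤᵏ, and set γ̃ⱼ = (1, γⱼ) ∈ ℤ^{k+1} (the vector γⱼ with a 1 prepended). Let S ⊆ {1,…,n}. If the ℤ-span of {γ̃ⱼ : j ∈ S} equals the ℤ-span of {γ̃₁,…,γ̃ₙ} (as subgroups of ℤ^{k+1}), then the ℤ-span of {γᵢ − γⱼ : i, j ∈ S} equals the ℤ-span of {γᵢ − γⱼ : 1 ≤ i, j ≤ n} (as subgroups of ℤᵏ). -/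
/-!
Subtracting `r • p` from `(r, v)`, for a fixed `p ∈ X`, sends every homogenized point `(1, x)` with
`x ∈ X` to the difference `x - p`, and sends `(0, v)` to `v`. So the span of the homogenized points
meets the hyperplane `r = 0` exactly in the span of the differences, and determines the latter.
-/

section Homogenization

variable {R M : Type*} [Ring R] [AddCommGroup M] [Module R M]

lemma mem_vectorSpan_of_prodMk_zero_mem_span {X : Set M} {p v : M} (hp : p ∈ X)
    (hv : ((0 : R), v) ∈ Submodule.span R (Prod.mk 1 '' X)) : v ∈ vectorSpan R X := by
  let toDifference : R × M →ₗ[R] M :=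
    LinearMap.snd R R M - (LinearMap.toSpanSingleton R M p).comp (LinearMap.fst R R M)
  have span_le : Submodule.span R (Prod.mk 1 '' X) ≤ (vectorSpan R X).comap toDifference := by
    rw [Submodule.span_le]
    rintro _ ⟨x, hx, rfl⟩
    simpa [toDifference] using vsub_mem_vectorSpan R hx hp
  simpa [toDifference] using span_le hv

lemma mem_vectorSpan_iff_prodMk_zero_mem_span {X : Set M} {v : M} :
    v ∈ vectorSpan R X ↔ ((0 : R), v) ∈ Submodule.span R (Prod.mk 1 '' X) := by
  constructor
  · suffices h_le : vectorSpan R X ≤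
        (Submodule.span R (Prod.mk 1 '' X)).comap (LinearMap.inr R R M) from
      fun hv ↦ h_le hv
    rw [vectorSpan_def, Submodule.span_le]
    rintro _ ⟨x, hx, y, hy, rfl⟩
    have h_sub := Submodule.sub_mem _
      (Submodule.subset_span (R := R) (Set.mem_image_of_mem (Prod.mk (1 : R)) hx))
      (Submodule.subset_span (Set.mem_image_of_mem (Prod.mk (1 : R)) hy))
    simpa using h_sub
  · intro hv
    rcases X.eq_empty_or_nonempty with rfl | ⟨p, hp⟩
    · simpa using hv
    · exact mem_vectorSpan_of_prodMk_zero_mem_span hp hv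

theorem stmt_2_general {X Y : Set M}
    (h : Submodule.span R (Prod.mk (1 : R) '' X) = Submodule.span R (Prod.mk (1 : R) '' Y)) :
    vectorSpan R X = vectorSpan R Y := by
  ext v
  rw [mem_vectorSpan_iff_prodMk_zero_mem_span, h, mem_vectorSpan_iff_prodMk_zero_mem_span]

lemma span_vecCons_one_image {k : ℕ} (X : Set (Fin k → R)) :
    Submodule.span R (Matrix.vecCons (1 : R) '' X) =
      (Submodule.span R (Prod.mk (1 : R) '' X)).map
        (Fin.consLinearEquiv R fun _ : Fin (k + 1) ↦ R).toLinearMap := by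
  rw [Submodule.map_span, Set.image_image]
  rfl

lemma vectorSpan_eq_of_span_vecCons_one_eq {k : ℕ} {X Y : Set (Fin k → R)}
    (h : Submodule.span R (Matrix.vecCons (1 : R) '' X) =
      Submodule.span R (Matrix.vecCons (1 : R) '' Y)) :
    vectorSpan R X = vectorSpan R Y := by
  rw [span_vecCons_one_image, span_vecCons_one_image] at h
  exact stmt_2_general (Submodule.map_injective_of_injective (LinearEquiv.injective _) h)

end Homogenization

open scoped Pointwise in
lemma closure_sub_eq_of_closure_vecCons_one_eq {k : ℕ} {X Y : Set (Fin k → ℤ)}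
    (h : AddSubgroup.closure (Matrix.vecCons (1 : ℤ) '' X) =
      AddSubgroup.closure (Matrix.vecCons (1 : ℤ) '' Y)) :
    AddSubgroup.closure (X - X) = AddSubgroup.closure (Y - Y) := by
  simp only [← Submodule.span_int_eq_addSubgroupClosure, Submodule.toAddSubgroup_inj] at h ⊢
  exact vectorSpan_eq_of_span_vecCons_one_eq h

/-- Lemma `embc2`.
Let `γ₁,…,γₙ ∈ ℤᵏ` and `γ̃ⱼ = (1, γⱼ) ∈ ℤ^{k+1}`.  If for a subset `S ⊆ {1,…,n}` the
ℤ-span of `{γ̃ⱼ : j ∈ S}` equals the ℤ-span of all the `γ̃ⱼ`, then the ℤ-span of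
`{γᵢ − γⱼ : i, j ∈ S}` equals the ℤ-span of all differences `γᵢ − γⱼ`. -/
theorem stmt_2 (n k : ℕ) (γ : Fin n → (Fin k → ℤ)) (S : Set (Fin n))
    (h : AddSubgroup.closure
          {v : Fin (k + 1) → ℤ | ∃ j ∈ S, v = Fin.cons (1 : ℤ) (γ j)}
        = AddSubgroup.closure (Set.range fun j : Fin n => Fin.cons (1 : ℤ) (γ j))) :
    AddSubgroup.closure {v : Fin k → ℤ | ∃ i ∈ S, ∃ j ∈ S, v = γ i - γ j}
      = AddSubgroup.closure {v : Fin k → ℤ | ∃ i j : Fin n, v = γ i - γ j} := by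
  have h_homogenized : AddSubgroup.closure (Matrix.vecCons 1 '' (γ '' S)) =
      AddSubgroup.closure (Matrix.vecCons 1 '' Set.range γ) := by
    simpa [Set.image, Set.range, Matrix.vecCons, eq_comm] using h
  simpa only [← Set.image2_sub, Set.image2, Set.exists_mem_image, Set.exists_range_iff, eq_comm]
    using closure_sub_eq_of_closure_vecCons_one_eq h_homogenized
end

section
/- Let n ≥ 1, let γ₁,…,γₙ ∈ ℤᵏ, and set γ̃ⱼ = (1, γⱼ) ∈ ℤ^{k+1}. Define Λ̃* = {x ∈ ℝ^{k+1} : ⟨γ̃ⱼ, x⟩ ∈ ℤ for all j} and Λ* = {y ∈ ℝᵏ : ⟨γᵢ − γⱼ, y⟩ ∈ ℤ for all i, j}. Let e₁ = (1,0,…,0) ∈ ℝ^{k+1}, and suppose ε̃₁,…,ε̃ₖ ∈ Λ̃* are such that ε̃₁,…,ε̃ₖ, e₁ are ℤ-linearly independent and generate Λ̃* as an abelian group. For r = 1,…,k let εᵣ ∈ ℝᵏ be obtained from ε̃ᵣ by deleting its first coordinate. Then ε₁,…,εₖ belong to Λ*, are ℤ-linearly independent, and generate Λ* as an abelian group; that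 is, they form a basis of the dual lattice Λ*. -/
/-!
Two facts about the projection `π` deleting the first coordinate drive the argument. First, `π`
maps the dual lattice of the vectors `(1, γⱼ)` onto the dual lattice of the differences `γᵢ - γⱼ`:
fixing an index `j₀`, a vector `y` of the latter lifts to `(-⟨γ_{j₀}, y⟩, y)`. Second, a vector
`(c, 0)` pairs with `(1, γⱼ)` to `c`, so the kernel of `π` on the first lattice is spanned by `e₁`.
Hence a basis containing `e₁` projects to a basis once `e₁` is removed.
-/

open Matrix

section FinCons

variable {R M N : Type*} [Ring R] [AddCommGroup M] [Module R M] [AddCommGroup N] [Module R N]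
  {m : ℕ} {u : M} {v : Fin m → M} {f : M →ₗ[R] N}

theorem disjoint_span_singleton_span_range_of_linearIndependent_finCons
    (h : LinearIndependent R (Fin.cons u v : Fin (m + 1) → M)) :
    Disjoint (R ∙ u) (Submodule.span R (Set.range v)) := by
  have hdisj : Disjoint {(0 : Fin (m + 1))} (Set.range Fin.succ) := by
    simp
  simpa only [Set.image_singleton, Fin.cons_zero, ← Set.range_comp, Function.comp_def,
    Fin.cons_succ] using h.disjoint_span_image hdisj

theorem linearIndependent_comp_of_finCons
    (h : LinearIndependent R (Fin.cons u v : Fin (m + 1) → M))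
    (hker : Submodule.span R (Set.range v) ⊓ LinearMap.ker f ≤ R ∙ u) :
    LinearIndependent R (f ∘ v) := by
  have hv : LinearIndependent R v := by
    simpa only [Function.comp_def, Fin.cons_succ] using h.comp Fin.succ (Fin.succ_injective m)
  refine hv.map (disjoint_iff_inf_le.mpr ?_)
  calc Submodule.span R (Set.range v) ⊓ LinearMap.ker f
      ≤ (R ∙ u) ⊓ Submodule.span R (Set.range v) := le_inf hker inf_le_left
    _ ≤ ⊥ := (disjoint_span_singleton_span_range_of_linearIndependent_finCons h).le_bot

theorem span_range_comp_eq_map_span_range_finCons (hu : f u = 0) :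
    Submodule.span R (Set.range (f ∘ v)) =
      (Submodule.span R (Set.range (Fin.cons u v : Fin (m + 1) → M))).map f := by
  rw [Submodule.map_span, Fin.range_cons, Set.image_insert_eq, hu, Submodule.span_insert_zero,
    Set.range_comp]

end FinCons

section IntegralDual

variable (R : Type*) {S ι : Type*} [CommRing R] [Ring S] [Algebra R S]

/-- The dual lattice of the `R`-span of a family `v` of vectors over an `R`-algebra `S`: the vectors
whose dot product with each `v j` lies in (the image of) `R`. Only the generators `v` are recorded,
since integrality against them is integrality against their `R`-span. -/
def integralDual {n : Type*} [Fintype n] (v : ι → n → S) : Submodule R (n → S) :=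
  ⨅ j, (1 : Submodule R S).comap (dotProductBilin S R (v j))

variable {R}

theorem mem_integralDual {n : Type*} [Fintype n] {v : ι → n → S} {x : n → S} :
    x ∈ integralDual R v ↔ ∀ j, v j ⬝ᵥ x ∈ (1 : Submodule R S) := by
  simp [integralDual]

variable {k : ℕ} {γ : ι → Fin k → S}

variable (R S k) in
/-- The projection `Sᵏ⁺¹ → Sᵏ` deleting the first coordinate, as an `R`-linear map. -/
def tailLinearMap : (Fin (k + 1) → S) →ₗ[R] (Fin k → S) :=
  LinearMap.funLeft R S Fin.succ

@[simp]
theorem tailLinearMap_apply (x : Fin (k + 1) → S) : tailLinearMap R S k x = Fin.tail x :=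
  rfl

theorem finCons_dotProduct (a : S) (w : Fin k → S) (x : Fin (k + 1) → S) :
    (Fin.cons a w : Fin (k + 1) → S) ⬝ᵥ x = a * x 0 + w ⬝ᵥ Fin.tail x :=
  cons_dotProduct a w x

theorem tail_mem_integralDual_sub {x : Fin (k + 1) → S}
    (hx : x ∈ integralDual R fun j ↦ (Fin.cons 1 (γ j) : Fin (k + 1) → S)) :
    Fin.tail x ∈ integralDual R fun p : ι × ι ↦ γ p.1 - γ p.2 := by
  simp only [mem_integralDual, finCons_dotProduct] at hx ⊢
  intro p
  simpa only [add_sub_add_left_eq_sub, ← sub_dotProduct] using sub_mem (hx p.1) (hx p.2)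

theorem finCons_mem_integralDual {y : Fin k → S}
    (hy : y ∈ integralDual R fun p : ι × ι ↦ γ p.1 - γ p.2) (j₀ : ι) :
    (Fin.cons (-(γ j₀ ⬝ᵥ y)) y : Fin (k + 1) → S) ∈
      integralDual R fun j ↦ (Fin.cons 1 (γ j) : Fin (k + 1) → S) := by
  rw [mem_integralDual] at hy ⊢
  intro j
  have hpair : (Fin.cons 1 (γ j) : Fin (k + 1) → S) ⬝ᵥ Fin.cons (-(γ j₀ ⬝ᵥ y)) y =
      (γ j - γ j₀) ⬝ᵥ y := by
    rw [finCons_dotProduct, Fin.cons_zero, Fin.tail_cons, one_mul, neg_add_eq_sub, sub_dotProduct]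
  exact hpair ▸ hy (j, j₀)

variable (R γ)

theorem map_tailLinearMap_integralDual [Nonempty ι] :
    (integralDual R fun j ↦ (Fin.cons 1 (γ j) : Fin (k + 1) → S)).map (tailLinearMap R S k) =
      integralDual R fun p : ι × ι ↦ γ p.1 - γ p.2 := by
  refine le_antisymm (Submodule.map_le_iff_le_comap.mpr fun _ ↦ tail_mem_integralDual_sub) ?_
  intro y hy
  obtain ⟨j₀⟩ := ‹Nonempty ι›
  exact ⟨_, finCons_mem_integralDual hy j₀, rfl⟩

theorem integralDual_inf_ker_tailLinearMap_le [Nonempty ι] :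
    (integralDual R fun j ↦ (Fin.cons 1 (γ j) : Fin (k + 1) → S)) ⊓
      LinearMap.ker (tailLinearMap R S k) ≤ R ∙ (Pi.single 0 1 : Fin (k + 1) → S) := by
  rintro x ⟨hx, hker⟩
  have htail : Fin.tail x = 0 := hker
  obtain ⟨j⟩ := ‹Nonempty ι›
  have hx₀ : x 0 ∈ (1 : Submodule R S) := by
    simpa only [finCons_dotProduct, htail, dotProduct_zero, one_mul, add_zero]
      using mem_integralDual.mp hx j
  obtain ⟨c, hc⟩ := Submodule.mem_one.mp hx₀
  refine Submodule.mem_span_singleton.mpr ⟨c, funext fun t ↦ ?_⟩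
  cases t using Fin.cases with
  | zero => simp [← hc, Algebra.smul_def]
  | succ t =>
    have ht : x t.succ = 0 := congrFun htail t
    simp [ht]

end IntegralDual

section IntegralDualInt

variable {ι n : Type*} [Fintype n] {v : ι → n → ℝ}

theorem mem_integralDual_int {x : n → ℝ} :
    x ∈ integralDual ℤ v ↔ ∀ j, ∃ z : ℤ, v j ⬝ᵥ x = z := by
  simp only [mem_integralDual, Submodule.mem_one, algebraMap_int_eq, eq_intCast, eq_comm]

theorem coe_closure_eq_iff_span_eq_integralDual {s : Set (n → ℝ)} :
    (AddSubgroup.closure s : Set (n → ℝ)) = {x | ∀ j, ∃ z : ℤ, v j ⬝ᵥ x = z} ↔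
      Submodule.span ℤ s = integralDual ℤ v := by
  have hcoe : {x | ∀ j, ∃ z : ℤ, v j ⬝ᵥ x = z} = (integralDual ℤ v : Set (n → ℝ)) :=
    Set.ext fun _ ↦ mem_integralDual_int.symm
  rw [hcoe, ← Submodule.span_int_eq_addSubgroupClosure, Submodule.coe_toAddSubgroup,
    SetLike.coe_set_eq]

theorem intCast_finCons_one {k : ℕ} (w : Fin k → ℤ) (t : Fin (k + 1)) :
    (((Fin.cons 1 w : Fin (k + 1) → ℤ) t : ℤ) : ℝ) =
      (Fin.cons 1 (fun s ↦ (w s : ℝ)) : Fin (k + 1) → ℝ) t := by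
  cases t using Fin.cases <;> simp

end IntegralDualInt

theorem stmt_3_general {R S ι : Type*} [CommRing R] [Ring S] [Algebra R S] [Nonempty ι] {k m : ℕ}
    (γ : ι → Fin k → S) (εt : Fin m → Fin (k + 1) → S)
    (hindep : LinearIndependent R
      (Fin.cons (Pi.single 0 1) εt : Fin (m + 1) → Fin (k + 1) → S))
    (hgen : Submodule.span R
        (Set.range (Fin.cons (Pi.single 0 1) εt : Fin (m + 1) → Fin (k + 1) → S)) =
      integralDual R fun j ↦ (Fin.cons 1 (γ j) : Fin (k + 1) → S)) :
    (∀ r, Fin.tail (εt r) ∈ integralDual R fun p : ι × ι ↦ γ p.1 - γ p.2) ∧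
      LinearIndependent R (fun r ↦ Fin.tail (εt r)) ∧
      Submodule.span R (Set.range fun r ↦ Fin.tail (εt r)) =
        integralDual R fun p : ι × ι ↦ γ p.1 - γ p.2 := by
  have hspan : Submodule.span R (Set.range fun r ↦ Fin.tail (εt r)) =
      integralDual R fun p : ι × ι ↦ γ p.1 - γ p.2 := by
    have he₁ : tailLinearMap R S k (Pi.single 0 1) = 0 := by
      ext t
      simp [Fin.tail]
    rw [← map_tailLinearMap_integralDual, ← hgen]
    exact span_range_comp_eq_map_span_range_finCons he₁
  refine ⟨fun r ↦ hspan ▸ Submodule.subset_span (Set.mem_range_self r), ?_, hspan⟩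
  have hle : Submodule.span R (Set.range εt) ≤
      integralDual R fun j ↦ (Fin.cons 1 (γ j) : Fin (k + 1) → S) := by
    rw [← hgen, Fin.range_cons]
    exact Submodule.span_mono (Set.subset_insert _ _)
  exact linearIndependent_comp_of_finCons hindep
    ((inf_le_inf_right _ hle).trans (integralDual_inf_ker_tailLinearMap_le R γ))

/-- Lemma `basisgen`.
With `γ̃ⱼ = (1, γⱼ)`, `Λ̃* = {x ∈ ℝ^{k+1} : ⟨γ̃ⱼ, x⟩ ∈ ℤ ∀ j}` and
`Λ* = {y ∈ ℝᵏ : ⟨γᵢ − γⱼ, y⟩ ∈ ℤ ∀ i,j}`: if `ε̃₁,…,ε̃ₖ ∈ Λ̃*` are such that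
`e₁, ε̃₁, …, ε̃ₖ` are ℤ-linearly independent and generate `Λ̃*` as an abelian group, then
the vectors `εᵣ` obtained by deleting the first coordinate of `ε̃ᵣ` lie in `Λ*`, are
ℤ-linearly independent, and generate `Λ*` as an abelian group. -/
theorem stmt_3 (n k : ℕ) (hn : 1 ≤ n) (γ : Fin n → (Fin k → ℤ))
    (εt : Fin k → (Fin (k + 1) → ℝ))
    (hmem : ∀ r : Fin k, ∀ j : Fin n, ∃ z : ℤ,
        (∑ t, ((Fin.cons (1 : ℤ) (γ j) : Fin (k + 1) → ℤ) t : ℝ) * εt r t) = (z : ℝ))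
    (hindep : LinearIndependent ℤ
        (Fin.cons (Pi.single (0 : Fin (k + 1)) (1 : ℝ)) εt : Fin (k + 1) → Fin (k + 1) → ℝ))
    (hgen : (AddSubgroup.closure
          (Set.range (Fin.cons (Pi.single (0 : Fin (k + 1)) (1 : ℝ)) εt
            : Fin (k + 1) → Fin (k + 1) → ℝ)) : Set (Fin (k + 1) → ℝ))
        = {x : Fin (k + 1) → ℝ | ∀ j : Fin n, ∃ z : ℤ,
            (∑ t, ((Fin.cons (1 : ℤ) (γ j) : Fin (k + 1) → ℤ) t : ℝ) * x t) = (z : ℝ)}) :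
    (∀ r : Fin k, ∀ i j : Fin n, ∃ z : ℤ,
        (∑ t, ((γ i t : ℝ) - (γ j t : ℝ)) * εt r t.succ) = (z : ℝ))
    ∧ LinearIndependent ℤ (fun r : Fin k => fun t : Fin k => εt r t.succ)
    ∧ (AddSubgroup.closure
          (Set.range fun r : Fin k => fun t : Fin k => εt r t.succ) : Set (Fin k → ℝ))
        = {y : Fin k → ℝ | ∀ i j : Fin n, ∃ z : ℤ,
            (∑ t, ((γ i t : ℝ) - (γ j t : ℝ)) * y t) = (z : ℝ)} := by
  have : Nonempty (Fin n) := ⟨⟨0, hn⟩⟩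
  simp only [intCast_finCons_one] at hgen
  obtain ⟨htail, hind, hspan⟩ := stmt_3_general (fun j t ↦ (γ j t : ℝ)) εt hindep
    (coe_closure_eq_iff_span_eq_integralDual.mp hgen)
  exact ⟨fun r i j ↦ mem_integralDual_int.mp (htail r) (i, j), hind,
    (coe_closure_eq_iff_span_eq_integralDual.mpr hspan).trans (Set.ext fun _ ↦ Prod.forall)⟩
end

section
/- Let k ≥ 0 be an integer and let p₁, p₂, n be integers greater than 2 satisfying k < p₁, p₂ − p₁ + k > p₁, and n − p₂ − k > p₁. Then the subset R̃ of ℝⁿ defined by the three equations Σ_{r=1}^{k} u_r² + Σ_{r=k+1}^{p₁} u_r² = p₁, Σ_{r=1}^{k} u_r² + Σ_{r=p₁+1}^{p₂} u_r² = p₂ − p₁ + k, and −Σ_{r=1}^{k} u_r² + Σ_{r=p₂+1}^{n} u_r² = n − p₂ − k, equipped with the subspace topology, is homeomorphic to the product of spheres S^{p₁−1} × S^{p₂−p₁−1} × S^{n−p₂−1} (unit spheres in ℝ^{p₁}, ℝ^{p₂−p₁}, ℝ^{n−p₂}). An explicit homeomorphism is u ↦ (u₁,…,u_{p₁}, (u_{p₁+1},…,u_{p₂})/√(p₂−p₁+k−Σ_{r≤k}u_r²),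 (u_{p₂+1},…,uₙ)/√(n−p₂−k+Σ_{r≤k}u_r²)). -/
open Finset

/-!
Let `a`, `b`, `c` be the right-hand sides of the three equations. For a solution `u`, write `x`,
`y`, `z` for its three blocks of coordinates and `g x` for the sum of the squares of the first `k`
coordinates. The equations say that `‖x‖² = a`, `‖y‖² = b - g x` and `‖z‖² = c + g x`.
Since `0 ≤ g x ≤ ‖x‖² = a < b` and `0 < c`, the vectors `y` and `z` range over spheres whose radii
are positive and depend continuously on `x`; rescaling each fibre to radius one trivializes the
bundle.
-/

section SphereBundle

open Metric

variable {X : Type*} (E F : Type*) [SeminormedAddCommGroup E] [SeminormedAddCommGroup F]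

/-- The bundle over `s` whose fibre over `x` is the sphere in `E` centred at the origin of squared
radius `ρ x`. Squared radii keep the conditions polynomial in the coordinates. -/
def sphereBundle (s : Set X) (ρ : X → ℝ) : Set (X × E) :=
  {q | q.1 ∈ s ∧ ‖q.2‖ ^ 2 = ρ q.1}

variable {E} [NormedSpace ℝ E] [NormedSpace ℝ F]

lemma norm_inv_sqrt_smul_eq_one_iff {a : ℝ} (ha : 0 < a) (v : E) :
    ‖(√a)⁻¹ • v‖ = 1 ↔ ‖v‖ ^ 2 = a := by
  rw [norm_smul, norm_inv, Real.norm_of_nonneg (Real.sqrt_nonneg a),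
    inv_mul_eq_one₀ (Real.sqrt_pos.2 ha).ne', Real.sqrt_eq_iff_eq_sq ha.le (norm_nonneg v), eq_comm]

lemma norm_sqrt_smul_sq {a : ℝ} (ha : 0 ≤ a) (v : E) : ‖√a • v‖ ^ 2 = a * ‖v‖ ^ 2 := by
  rw [norm_smul, mul_pow, Real.norm_eq_abs, sq_abs, Real.sq_sqrt ha]

variable (E) [TopologicalSpace X] {s : Set X} {ρ σ : X → ℝ}

/-- The trivialization of a sphere bundle of positive radius by fibrewise normalization. -/
noncomputable def sphereBundleHomeomorph (hρ : ContinuousOn ρ s) (hρ_pos : ∀ x ∈ s, 0 < ρ x) :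
    sphereBundle E s ρ ≃ₜ s × sphere (0 : E) 1 where
  toFun q := (⟨q.1.1, q.2.1⟩, ⟨(√(ρ q.1.1))⁻¹ • q.1.2, mem_sphere_zero_iff_norm.2 <|
    (norm_inv_sqrt_smul_eq_one_iff (hρ_pos _ q.2.1) _).2 q.2.2⟩)
  invFun w := ⟨(w.1, √(ρ w.1) • (w.2 : E)), w.1.2, by
    rw [norm_sqrt_smul_sq (hρ_pos _ w.1.2).le, norm_eq_of_mem_sphere, one_pow, mul_one]⟩
  left_inv q := Subtype.ext <| Prod.ext rfl <|
    smul_inv_smul₀ (Real.sqrt_pos.2 (hρ_pos _ q.2.1)).ne' q.1.2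
  right_inv w := Prod.ext rfl <| Subtype.ext <|
    inv_smul_smul₀ (Real.sqrt_pos.2 (hρ_pos _ w.1.2)).ne' (w.2 : E)
  continuous_toFun := by
    have hρ' : Continuous fun q : sphereBundle E s ρ ↦ ρ q.1.1 :=
      hρ.comp_continuous (by fun_prop) fun q ↦ q.2.1
    have hinv : Continuous fun q : sphereBundle E s ρ ↦ (√(ρ q.1.1))⁻¹ :=
      hρ'.sqrt.inv₀ fun q ↦ (Real.sqrt_pos.2 (hρ_pos _ q.2.1)).ne'
    exact .prodMk (by fun_prop) (.subtype_mk (hinv.smul (by fun_prop)) _)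
  continuous_invFun := by
    have hρ' : Continuous fun w : s × sphere (0 : E) 1 ↦ ρ w.1 :=
      hρ.comp_continuous (by fun_prop) fun w ↦ w.1.2
    exact .subtype_mk (.prodMk (by fun_prop) (hρ'.sqrt.smul (by fun_prop))) _

/-- The trivialization of the fibre product over `s` of two sphere bundles of positive radii,
the fibre product being encoded as a sphere bundle over the total space of the first one. -/
noncomputable def sphereBundleFiberProductHomeomorph
    (hρ : ContinuousOn ρ s) (hρ_pos : ∀ x ∈ s, 0 < ρ x)
    (hσ : ContinuousOn σ s) (hσ_pos : ∀ x ∈ s, 0 < σ x) :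
    sphereBundle F (sphereBundle E s ρ) (σ ∘ Prod.fst) ≃ₜ
      s × sphere (0 : E) 1 × sphere (0 : F) 1 :=
  (sphereBundleHomeomorph F (hσ.comp continuousOn_fst fun _ hq ↦ hq.1)
    fun q hq ↦ hσ_pos q.1 hq.1).trans <|
  ((sphereBundleHomeomorph E hρ hρ_pos).prodCongr (.refl _)).trans (.prodAssoc _ _ _)

/-- Radial rescaling of the sphere of squared radius `a` to the unit sphere. -/
noncomputable def sphereHomeomorphUnitSphere {a : ℝ} (ha : 0 < a) :
    {x : E | ‖x‖ ^ 2 = a} ≃ₜ sphere (0 : E) 1 :=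
  (Homeomorph.smulOfNeZero (√a)⁻¹ (inv_ne_zero (Real.sqrt_pos.2 ha).ne')).sets <| by
    ext x
    exact (norm_inv_sqrt_smul_eq_one_iff ha x).symm.trans mem_sphere_zero_iff_norm.symm

end SphereBundle

section BlockSums

variable {M : Type*} [AddCommMonoid M] {n k p q m : ℕ}

lemma sum_filter_lt_add_sum_filter_le_lt (hkp : k ≤ p) (f : Fin n → M) :
    ∑ r with r.val < k, f r + ∑ r with k ≤ r.val ∧ r.val < p, f r = ∑ r with r.val < p, f r := by
  rw [← sum_filter_add_sum_filter_not (univ.filter fun r : Fin n ↦ r.val < p) (fun r ↦ r.val < k),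
    filter_filter, filter_filter]
  congr 2 <;> grind

lemma sum_filter_lt_eq_sum_castAdd (hkp : k ≤ p) (f : Fin (p + q) → M) :
    ∑ r with r.val < k, f r = ∑ i : Fin p with i.val < k, f (i.castAdd q) := by
  have h (j : Fin q) : ¬ p + j.val < k := by omega
  simp [sum_filter, Fin.sum_univ_add, h]

lemma sum_filter_le_eq_sum_natAdd (f : Fin (p + q) → M) :
    ∑ r with p ≤ r.val, f r = ∑ j : Fin q, f (j.natAdd p) := by
  have h (i : Fin p) : ¬ p ≤ i.val := i.isLt.not_ge
  simp [sum_filter, Fin.sum_univ_add, h]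

lemma sum_filter_le_lt_eq_sum_castAdd_natAdd (f : Fin (p + q + m) → M) :
    ∑ r with p ≤ r.val ∧ r.val < p + q, f r = ∑ j : Fin q, f ((j.natAdd p).castAdd m) := by
  have h (i : Fin p) : ¬ p ≤ i.val := i.isLt.not_ge
  simp [sum_filter, Fin.sum_univ_add, h]

end BlockSums

section ThreeSphereSystem

/-- The real moment-angle manifold `R̃` of the paper, with arbitrary right-hand sides `a`, `b`, `c`
of its three equations. Coordinates are indexed from `0`. -/
def threeSphereSystem (k p₁ p₂ n : ℕ) (a b c : ℝ) : Set (Fin n → ℝ) :=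
  {u | ∑ r with r.val < k, u r ^ 2 + ∑ r with k ≤ r.val ∧ r.val < p₁, u r ^ 2 = a ∧
    ∑ r with r.val < k, u r ^ 2 + ∑ r with p₁ ≤ r.val ∧ r.val < p₂, u r ^ 2 = b ∧
    -∑ r with r.val < k, u r ^ 2 + ∑ r with p₂ ≤ r.val, u r ^ 2 = c}

variable {k p q m : ℕ} {a b c : ℝ}

/-- The sum of the squares of the first `k` coordinates, on which the radii of the fibres depend. -/
def initialSumSq (k : ℕ) (x : EuclideanSpace ℝ (Fin p)) : ℝ :=
  ∑ i with i.val < k, x i ^ 2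

@[fun_prop]
lemma continuous_initialSumSq : Continuous (initialSumSq (p := p) k) := by
  unfold initialSumSq
  fun_prop

lemma initialSumSq_nonneg (x : EuclideanSpace ℝ (Fin p)) : 0 ≤ initialSumSq k x :=
  sum_nonneg fun _ _ ↦ sq_nonneg _

lemma initialSumSq_le_norm_sq (x : EuclideanSpace ℝ (Fin p)) : initialSumSq k x ≤ ‖x‖ ^ 2 := by
  rw [EuclideanSpace.real_norm_sq_eq]
  exact sum_le_univ_sum_of_nonneg fun _ ↦ sq_nonneg _

lemma initialSumSq_self (x : EuclideanSpace ℝ (Fin p)) : initialSumSq p x = ‖x‖ ^ 2 := by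
  simp [initialSumSq, EuclideanSpace.real_norm_sq_eq]

/-- Concatenation of three vectors, as a homeomorphism. -/
noncomputable def euclideanAppendHomeomorph (p q m : ℕ) :
    (EuclideanSpace ℝ (Fin p) × EuclideanSpace ℝ (Fin q)) × EuclideanSpace ℝ (Fin m) ≃ₜ
      (Fin (p + q + m) → ℝ) :=
  ((((PiLp.homeomorph 2 _).prodCongr (PiLp.homeomorph 2 _)).trans
    (Fin.appendHomeomorph p q)).prodCongr (PiLp.homeomorph 2 _)).trans
      (Fin.appendHomeomorph (p + q) m)

lemma euclideanAppendHomeomorph_apply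
    (w : (EuclideanSpace ℝ (Fin p) × EuclideanSpace ℝ (Fin q)) × EuclideanSpace ℝ (Fin m)) :
    euclideanAppendHomeomorph p q m w = Fin.append (Fin.append w.1.1 w.1.2) w.2 :=
  rfl

lemma mem_sphereBundle_iff_append_mem_threeSphereSystem (hkp : k ≤ p)
    (w : (EuclideanSpace ℝ (Fin p) × EuclideanSpace ℝ (Fin q)) × EuclideanSpace ℝ (Fin m)) :
    w ∈ sphereBundle (EuclideanSpace ℝ (Fin m))
        (sphereBundle (EuclideanSpace ℝ (Fin q)) {x : EuclideanSpace ℝ (Fin p) | ‖x‖ ^ 2 = a}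
          fun x ↦ b - initialSumSq k x)
        ((fun x ↦ c + initialSumSq k x) ∘ Prod.fst) ↔
      euclideanAppendHomeomorph p q m w ∈ threeSphereSystem k p (p + q) (p + q + m) a b c := by
  rw [euclideanAppendHomeomorph_apply]
  set u : Fin (p + q + m) → ℝ := Fin.append (Fin.append w.1.1 w.1.2) w.2 with hu
  have initial_sum (l : ℕ) (hl : l ≤ p) :
      ∑ r with r.val < l, u r ^ 2 = initialSumSq l w.1.1 := by
    simp only [sum_filter_lt_eq_sum_castAdd (hl.trans (Nat.le_add_right p q)),
      sum_filter_lt_eq_sum_castAdd hl, hu, Fin.append_left, initialSumSq]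
  have first_block :
      initialSumSq k w.1.1 + ∑ r with k ≤ r.val ∧ r.val < p, u r ^ 2 = ‖w.1.1‖ ^ 2 := by
    rw [← initial_sum k hkp, sum_filter_lt_add_sum_filter_le_lt hkp (u · ^ 2), initial_sum p le_rfl,
      initialSumSq_self]
  have second_block : ∑ r with p ≤ r.val ∧ r.val < p + q, u r ^ 2 = ‖w.1.2‖ ^ 2 := by
    simp only [sum_filter_le_lt_eq_sum_castAdd_natAdd, hu, Fin.append_left, Fin.append_right,
      EuclideanSpace.real_norm_sq_eq]
  have third_block : ∑ r with p + q ≤ r.val, u r ^ 2 = ‖w.2‖ ^ 2 := by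
    simp only [sum_filter_le_eq_sum_natAdd, hu, Fin.append_right, EuclideanSpace.real_norm_sq_eq]
  simp only [threeSphereSystem, sphereBundle, Set.mem_ofPred_eq, Function.comp_apply,
    initial_sum k hkp, first_block, second_block, third_block, and_assoc, eq_sub_iff_add_eq',
    neg_add_eq_iff_eq_add, add_comm c]

/-- The homeomorphism of the paper, with the first block normalized as well. -/
noncomputable def threeSphereSystemHomeomorph (hkp : k ≤ p) (ha : 0 < a) (hab : a < b)
    (hc : 0 < c) :
    threeSphereSystem k p (p + q) (p + q + m) a b c ≃ₜ
      Metric.sphere (0 : EuclideanSpace ℝ (Fin p)) 1 ×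
        Metric.sphere (0 : EuclideanSpace ℝ (Fin q)) 1 ×
          Metric.sphere (0 : EuclideanSpace ℝ (Fin m)) 1 :=
  ((euclideanAppendHomeomorph p q m).subtype
    (mem_sphereBundle_iff_append_mem_threeSphereSystem hkp)).symm.trans <|
  (sphereBundleFiberProductHomeomorph _ _ (by fun_prop)
    (fun x (hx : ‖x‖ ^ 2 = a) ↦ sub_pos.2 <|
      ((initialSumSq_le_norm_sq x).trans_eq hx).trans_lt hab)
    (by fun_prop) fun x _ ↦ add_pos_of_pos_of_nonneg hc (initialSumSq_nonneg x)).trans <|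
  (sphereHomeomorphUnitSphere _ ha).prodCongr (.refl _)

end ThreeSphereSystem

theorem stmt_6_general {k p₁ p₂ n : ℕ} (hk : k ≤ p₁) (h12 : p₁ ≤ p₂) (h2n : p₂ ≤ n) {a b c : ℝ}
    (ha : 0 < a) (hab : a < b) (hc : 0 < c) :
    Nonempty (threeSphereSystem k p₁ p₂ n a b c ≃ₜ
      Metric.sphere (0 : EuclideanSpace ℝ (Fin p₁)) 1 ×
        Metric.sphere (0 : EuclideanSpace ℝ (Fin (p₂ - p₁))) 1 ×
          Metric.sphere (0 : EuclideanSpace ℝ (Fin (n - p₂))) 1) := by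
  obtain ⟨q, rfl⟩ := Nat.exists_eq_add_of_le h12
  obtain ⟨m, rfl⟩ := Nat.exists_eq_add_of_le h2n
  rw [Nat.add_sub_cancel_left, Nat.add_sub_cancel_left]
  exact ⟨threeSphereSystemHomeomorph hk ha hab hc⟩

/-- system `threesphereeq` in the proof of Theorem `threespheretheo`.
For `k ≥ 0` and `p₁, p₂, n > 2` with `k < p₁`, `p₂ − p₁ + k > p₁`, `n − p₂ − k > p₁`,
the subset of `ℝⁿ` cut out by the three quadratic equations is homeomorphic to the
product of spheres `S^{p₁−1} × S^{p₂−p₁−1} × S^{n−p₂−1}`. -/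
theorem stmt_6 (k p₁ p₂ n : ℕ) (hp₁ : 2 < p₁) (hp₂ : 2 < p₂) (hn : 2 < n)
    (h1 : k < p₁)
    (h2 : (p₁ : ℤ) < (p₂ : ℤ) - (p₁ : ℤ) + (k : ℤ))
    (h3 : (p₁ : ℤ) < (n : ℤ) - (p₂ : ℤ) - (k : ℤ)) :
    Nonempty
      ((({u : Fin n → ℝ |
          ((∑ r ∈ univ.filter (fun r : Fin n => (r : ℕ) < k), u r ^ 2)
            + ∑ r ∈ univ.filter (fun r : Fin n => k ≤ (r : ℕ) ∧ (r : ℕ) < p₁), u r ^ 2)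
            = (p₁ : ℝ) ∧
          ((∑ r ∈ univ.filter (fun r : Fin n => (r : ℕ) < k), u r ^ 2)
            + ∑ r ∈ univ.filter (fun r : Fin n => p₁ ≤ (r : ℕ) ∧ (r : ℕ) < p₂), u r ^ 2)
            = (p₂ : ℝ) - (p₁ : ℝ) + (k : ℝ) ∧
          (-(∑ r ∈ univ.filter (fun r : Fin n => (r : ℕ) < k), u r ^ 2)
            + ∑ r ∈ univ.filter (fun r : Fin n => p₂ ≤ (r : ℕ)), u r ^ 2)
            = (n : ℝ) - (p₂ : ℝ) - (k : ℝ)} : Set (Fin n → ℝ)))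
      ≃ₜ (Metric.sphere (0 : EuclideanSpace ℝ (Fin p₁)) 1
          × Metric.sphere (0 : EuclideanSpace ℝ (Fin (p₂ - p₁))) 1
          × Metric.sphere (0 : EuclideanSpace ℝ (Fin (n - p₂))) 1)) := by
  have hc : (0 : ℝ) < (n : ℝ) - p₂ - k := by exact_mod_cast (Int.natCast_nonneg p₁).trans_lt h3
  exact stmt_6_general h1.le (by omega) (by omega) (by positivity) (by exact_mod_cast h2) hc
end

section
/- Let γ̃₁,…,γ̃ₙ ∈ ℤᵈ, δ ∈ ℝᵈ, and let R̃ = {u ∈ ℝⁿ : Σ_{j=1}^{n} (uⱼ)²·γ̃ⱼ = δ}. Let J(1),…,J(n) ≥ 1 be positive integers and let R̃^J = {w = (w_{j,s})_{1≤j≤n, 1≤s≤J(j)} : Σ_{j=1}^{n} (Σ_{s=1}^{J(j)} w_{j,s}²)·γ̃ⱼ = δ} be the multiwedge of R̃. If for every u ∈ R̃ the ℤ-span of {γ̃ⱼ : uⱼ ≠ 0} equals the ℤ-span of {γ̃₁,…,γ̃ₙ}, then for every w ∈ R̃^J the ℤ-span of {γ̃ⱼ : w_{j,s} ≠ 0 for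 some s} equals the ℤ-span of {γ̃₁,…,γ̃ₙ}. -/
/-!
Collapse each group of repeated variables `w j` to its Euclidean norm `u j = ‖w j‖`. Then
`u j ^ 2 = ∑ s, w j s ^ 2`, so `u` satisfies the original quadrics, and a norm vanishes only at
the zero vector, so `u` and `w` involve the same coefficient vectors.
-/

section Multiwedge

variable {ι L V : Type*} {κ : ι → Type*} [Fintype ι] [∀ j, Fintype (κ j)] [AddCommMonoid V]
  [Module ℝ V]

/-- The real moment-angle manifold `R̃` of the quadrics with coefficient vectors `c j` and
right-hand side `δ`, both in an arbitrary real vector space: the system is one vector equation. -/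
def realMomentAngle (c : ι → V) (δ : V) : Set (ι → ℝ) :=
  {u | ∑ j, u j ^ 2 • c j = δ}

/-- The simplicial multiwedge of `realMomentAngle c δ`: the variable `u j` is repeated once for each
element of `κ j`, so that `J(j)` is the cardinality of `κ j`. -/
def multiwedge (κ : ι → Type*) [∀ j, Fintype (κ j)] (c : ι → V) (δ : V) :
    Set (∀ j, κ j → ℝ) :=
  {w | ∑ j, (∑ s, w j s ^ 2) • c j = δ}

theorem norm_mem_realMomentAngle {c : ι → V} {δ : V} {w : ∀ j, κ j → ℝ}
    (hw : w ∈ multiwedge κ c δ) :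
    (fun j ↦ ‖WithLp.toLp 2 (w j)‖) ∈ realMomentAngle c δ := by
  simpa only [realMomentAngle, multiwedge, Set.mem_ofPred_eq, EuclideanSpace.real_norm_sq_eq]
    using hw

theorem exists_mem_realMomentAngle_ne_zero_iff {c : ι → V} {δ : V} {w : ∀ j, κ j → ℝ}
    (hw : w ∈ multiwedge κ c δ) :
    ∃ u ∈ realMomentAngle c δ, ∀ j, u j ≠ 0 ↔ w j ≠ 0 :=
  ⟨_, norm_mem_realMomentAngle hw, fun _ ↦ norm_ne_zero_iff.trans (WithLp.toLp_eq_zero 2).not⟩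

-- `f` regards the lattice vectors `γ j` as coefficient vectors of the quadrics.
theorem stmt_9_general [AddGroup L] (f : L → V) (γ : ι → L) (δ : V)
    (h : ∀ u ∈ realMomentAngle (f ∘ γ) δ,
      AddSubgroup.closure (γ '' {j | u j ≠ 0}) = AddSubgroup.closure (Set.range γ)) :
    ∀ w ∈ multiwedge κ (f ∘ γ) δ,
      AddSubgroup.closure (γ '' {j | w j ≠ 0}) = AddSubgroup.closure (Set.range γ) := by
  intro w hw
  obtain ⟨u, hu, u_ne_zero_iff⟩ := exists_mem_realMomentAngle_ne_zero_iff hw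
  simpa only [u_ne_zero_iff] using h u hu

end Multiwedge

/-- lattice form of Lemma `multiwedgedelzant`.
If for every point `u` of the real moment-angle manifold `R̃ = {u : Σⱼ uⱼ²·γ̃ⱼ = δ}` the
ℤ-span of `{γ̃ⱼ : uⱼ ≠ 0}` equals the ℤ-span of all the `γ̃ⱼ`, then the same holds for
every point `w` of the multiwedge `R̃^J` (obtained by repeating the variable `uⱼ`
exactly `J(j) ≥ 1` times). -/
theorem stmt_9 (n d : ℕ) (γ : Fin n → (Fin d → ℤ)) (δ : Fin d → ℝ)
    (J : Fin n → ℕ) (hJ : ∀ j, 1 ≤ J j)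
    (h : ∀ u : Fin n → ℝ, (∀ r : Fin d, ∑ j, u j ^ 2 * (γ j r : ℝ) = δ r) →
      AddSubgroup.closure {v : Fin d → ℤ | ∃ j : Fin n, u j ≠ 0 ∧ v = γ j}
        = AddSubgroup.closure (Set.range γ)) :
    ∀ w : (j : Fin n) → Fin (J j) → ℝ,
      (∀ r : Fin d, ∑ j, (∑ s, w j s ^ 2) * (γ j r : ℝ) = δ r) →
      AddSubgroup.closure {v : Fin d → ℤ | ∃ j : Fin n, (∃ s, w j s ≠ 0) ∧ v = γ j}
        = AddSubgroup.closure (Set.range γ) := by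
  revert h
  simpa [realMomentAngle, multiwedge, funext_iff, Function.ne_iff, Set.image, eq_comm] using
    stmt_9_general (κ := fun j ↦ Fin (J j)) (fun v r ↦ (v r : ℝ)) γ δ
end
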